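/- arXiv:1903.11859 — 6 statements merged into one kernel-verified Lean document; each statement's English description precedes it below -/
import Mathlib

section
/- Let H be a real inner product space, let a > 0, Δt > 0, and a_0 be real numbers with a_0 ≥ a/2 and a_0 ≠ a. Let (u^n)_{n≥0} and (q^n)_{n≥0} be sequences in H such that for every n ≥ 0 the identity ⟨u^{n+1} − u^n, u^{n+1}⟩ = −(a − a_0)·Δt·⟨q^n, q^{n+1}⟩ − a_0·Δt·‖q^{n+1}‖² holds. Then for every n ≥ 0, ‖u^n‖² + a_0·Δt·‖q^n‖² ≤ ‖u^0‖² + a_0·Δt·‖q^0‖². -/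
open RealInnerProductSpace

/-- A cross term with coefficient `a - a₀` is absorbed by the diagonal terms when `0 ≤ a ≤ 2 a₀`. -/
theorem inner_cross_term_nonneg {H : Type*} [NormedAddCommGroup H] [InnerProductSpace ℝ H]
    {a a₀ : ℝ} (ha : 0 ≤ a) (ha₀ : a / 2 ≤ a₀) (x y : H) :
    0 ≤ a₀ * (‖x‖ ^ 2 + ‖y‖ ^ 2) + 2 * (a - a₀) * ⟪x, y⟫ := by
  have hadd : 0 ≤ a / 2 * ‖x + y‖ ^ 2 := by positivity
  have hsub : 0 ≤ (a₀ - a / 2) * ‖x - y‖ ^ 2 :=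
    mul_nonneg (sub_nonneg.2 ha₀) (sq_nonneg _)
  rw [norm_add_sq_real] at hadd
  rw [norm_sub_sq_real] at hsub
  linarith

/-- Theorem 3.1: unconditional stability of the first order EIN-LDG scheme,
in abstract energy form. -/
theorem stmt_2 {H : Type*} [NormedAddCommGroup H] [InnerProductSpace ℝ H]
    (a Δt a₀ : ℝ) (ha : 0 < a) (hΔt : 0 < Δt)
    (ha₀ : a₀ ≥ a / 2) (hne : a₀ ≠ a)
    (u q : ℕ → H)
    (hscheme : ∀ n : ℕ,
      ⟪u (n + 1) - u n, u (n + 1)⟫ =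
        -((a - a₀) * Δt * ⟪q n, q (n + 1)⟫) - a₀ * Δt * ‖q (n + 1)‖ ^ 2) :
    ∀ n : ℕ, ‖u n‖ ^ 2 + a₀ * Δt * ‖q n‖ ^ 2 ≤ ‖u 0‖ ^ 2 + a₀ * Δt * ‖q 0‖ ^ 2 := by
  intro n
  induction n with
  | zero => exact le_rfl
  | succ n ih =>
    refine le_trans ?_ ih
    have hcross := mul_nonneg hΔt.le (inner_cross_term_nonneg ha.le ha₀ (q n) (q (n + 1)))
    have hdiff := norm_sub_sq_real (u (n + 1)) (u n)
    have hnonneg := sq_nonneg ‖u (n + 1) - u n‖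
    have hstep := hscheme n
    rw [inner_sub_left, real_inner_self_eq_norm_sq, real_inner_comm] at hstep
    linarith
end

section
/- Let H be a real inner product space, let a > 0, Δt > 0, and a_0 be real numbers with a_0 ≥ a/2 and a_0 ≠ a. Let (u^n)_{n≥0}, (u^{n,1})_{n≥0}, (q^n)_{n≥0}, (q^{n,1})_{n≥0} be sequences in H such that for every n ≥ 0 the following three identities hold: (i) ½‖u^{n,1}‖² + ½‖u^{n,1} − u^n‖² − ½‖u^n‖² + ½(a − a_0)Δt⟨q^n, q^{n,1}⟩ + ½a_0Δt‖q^{n,1}‖² = 0; (ii) ½‖u^{n+1}‖² + ½‖u^{n+1} − u^{n,1}‖² − ½‖u^{n,1}‖² + (a_0 − a/2)Δt⟨q^n, q^{n+1}⟩ + (a − 3a_0/2)Δt⟨q^{n,1}, q^{n+1}⟩ + ½a_0Δt‖q^{n+1}‖² = 0; (iii) ‖u^{n,1} − u^n‖² + ½(a − a_0)Δt⟨q^n, q^{n,1} − q^n⟩ + ½a_0Δt⟨q^{n,1}, q^{n,1} − q^n⟩ = 0. Then for every n ≥ 0, ‖u^n‖² + ½a_0·Δt·‖q^n‖² ≤ ‖u^0‖²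 + ½a_0·Δt·‖q^0‖². -/
open RealInnerProductSpace

/-- Sum-of-squares decomposition, with `α = a / a₀`, of `α` times the quadratic form in
`(q^n, q^{n,1}, q^{n+1})` that governs the energy decay over one time step. -/
lemma energy_form_eq_sum_of_squares {H : Type*} [NormedAddCommGroup H] [InnerProductSpace ℝ H]
    (α : ℝ) (p r s : H) :
    α * (1 / 2 * ‖p‖ ^ 2 + ‖r‖ ^ 2 + 1 / 2 * ‖s‖ ^ 2 + (α - 1) * ⟪p, r⟫
        + (2 - α) * ⟪p, s⟫ + (2 * α - 3) * ⟪r, s⟫)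
      + (2 * α - 3) * (α - 2) * ((α - 1) * ⟪p, r - p⟫ + ⟪r, r - p⟫)
      = α / 2 * ‖s + (2 - α) • p + (2 * α - 3) • r‖ ^ 2
        + (4 - α) / 2 * ‖(α - 1) • p + r‖ ^ 2
        + 2 * (α - 1) ^ 2 * (2 - α) * ‖p - r‖ ^ 2 := by
  simp only [← real_inner_self_eq_norm_sq, inner_add_left, inner_add_right, inner_sub_left,
    inner_sub_right, real_inner_smul_left, real_inner_smul_right]
  rw [real_inner_comm p r, real_inner_comm p s, real_inner_comm r s]
  ring

/-- Theorem 3.2: unconditional stability of the second order EIN-LDG scheme,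
in abstract energy form.  Here `u1 n` and `q1 n` denote the intermediate
Runge–Kutta stage values `u^{n,1}` and `q^{n,1}`. -/
theorem stmt_3 {H : Type*} [NormedAddCommGroup H] [InnerProductSpace ℝ H]
    (a Δt a₀ : ℝ) (ha : 0 < a) (hΔt : 0 < Δt)
    (ha₀ : a₀ ≥ a / 2) (hne : a₀ ≠ a)
    (u u1 q q1 : ℕ → H)
    (hi : ∀ n : ℕ,
      (1 / 2) * ‖u1 n‖ ^ 2 + (1 / 2) * ‖u1 n - u n‖ ^ 2 - (1 / 2) * ‖u n‖ ^ 2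
        + (1 / 2) * (a - a₀) * Δt * ⟪q n, q1 n⟫
        + (1 / 2) * a₀ * Δt * ‖q1 n‖ ^ 2 = 0)
    (hii : ∀ n : ℕ,
      (1 / 2) * ‖u (n + 1)‖ ^ 2 + (1 / 2) * ‖u (n + 1) - u1 n‖ ^ 2
        - (1 / 2) * ‖u1 n‖ ^ 2
        + (a₀ - a / 2) * Δt * ⟪q n, q (n + 1)⟫
        + (a - 3 * a₀ / 2) * Δt * ⟪q1 n, q (n + 1)⟫
        + (1 / 2) * a₀ * Δt * ‖q (n + 1)‖ ^ 2 = 0)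
    (hiii : ∀ n : ℕ,
      ‖u1 n - u n‖ ^ 2 + (1 / 2) * (a - a₀) * Δt * ⟪q n, q1 n - q n⟫
        + (1 / 2) * a₀ * Δt * ⟪q1 n, q1 n - q n⟫ = 0) :
    ∀ n : ℕ,
      ‖u n‖ ^ 2 + (1 / 2) * a₀ * Δt * ‖q n‖ ^ 2 ≤
        ‖u 0‖ ^ 2 + (1 / 2) * a₀ * Δt * ‖q 0‖ ^ 2 := by
  have ha₀_pos : 0 < a₀ := by linarith
  obtain ⟨α, rfl⟩ : ∃ α, a = α * a₀ := ⟨a / a₀, by field_simp⟩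
  have hα : 0 < α := pos_of_mul_pos_left ha ha₀_pos.le
  have hα2 : α ≤ 2 := by nlinarith
  intro n
  induction n with
  | zero => exact le_rfl
  | succ n ih =>
    refine le_trans ?_ ih
    have key := energy_form_eq_sum_of_squares α (q n) (q1 n) (q (n + 1))
    have hsq : 0 ≤ α / 2 * ‖q (n + 1) + (2 - α) • q n + (2 * α - 3) • q1 n‖ ^ 2
        + (4 - α) / 2 * ‖(α - 1) • q n + q1 n‖ ^ 2
        + 2 * (α - 1) ^ 2 * (2 - α) * ‖q n - q1 n‖ ^ 2 := by
      have h4 : 0 ≤ 4 - α := by linarith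
      have h2 : 0 ≤ 2 - α := by linarith
      positivity
    rw [← key] at hsq
    have hform := mul_nonneg (mul_pos ha₀_pos hΔt).le hsq
    have hstage : 0 ≤ (α + 2 * (2 * α - 3) * (α - 2)) * ‖u1 n - u n‖ ^ 2 :=
      mul_nonneg (by nlinarith [sq_nonneg (8 * α - 13)]) (sq_nonneg _)
    have hstep : 0 ≤ α * ‖u (n + 1) - u1 n‖ ^ 2 := by positivity
    refine le_of_mul_le_mul_left ?_ hα
    linear_combination hform + hstage + hstep + 2 * α * hi n + 2 * α * hii n
      + 2 * (2 * α - 3) * (α - 2) * hiii n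
end

section
/- Let a > 0 and a_0 be real numbers with a_0 > a/2 and a_0 ≠ a, and set δ = a_0/2. Define the symmetric 3×3 real matrices A = [[δ, (a − a_0)/2, a_0 − a/2], [(a − a_0)/2, a_0, a − 3a_0/2], [a_0 − a/2, a − 3a_0/2, a_0 − δ]] and B = [[(a_0 − a)/2, a/4 − a_0/2, 0], [a/4 − a_0/2, a_0/2, 0], [0, 0, 0]]. Then there exists a real number σ > −1 such that the matrix A + σB is positive definite. -/
/-- Lemma 3.1: existence of `σ > -1` making `A + σ B` positive definite. -/
theorem stmt_5 (a a₀ : ℝ) (ha : 0 < a) (ha₀ : a₀ > a / 2) (hne : a₀ ≠ a) :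
    let δ : ℝ := a₀ / 2
    let A : Matrix (Fin 3) (Fin 3) ℝ :=
      !![δ, (a - a₀) / 2, a₀ - a / 2;
         (a - a₀) / 2, a₀, a - 3 * a₀ / 2;
         a₀ - a / 2, a - 3 * a₀ / 2, a₀ - δ]
    let B : Matrix (Fin 3) (Fin 3) ℝ :=
      !![(a₀ - a) / 2, a / 4 - a₀ / 2, 0;
         a / 4 - a₀ / 2, a₀ / 2, 0;
         0, 0, 0]
    ∃ σ : ℝ, σ > -1 ∧ (A + σ • B).PosDef := by
  intro δ A B
  have ht : 0 < a₀ := by linarith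
  have hk : a₀ - a ≠ 0 := sub_ne_zero.mpr hne
  have hc : 0 < 12 * a₀ - 5 * a := by linarith
  -- This `σ` maximizes `det (A + σ B)`, a concave quadratic in `σ`.
  refine ⟨2 * (2 * a₀ - a) * (3 * a₀ - 2 * a) / (a * a₀), ?_, ?_⟩
  · rw [gt_iff_lt, lt_div_iff₀ (by positivity)]
    nlinarith [sq_nonneg (24 * a₀ - 13 * a), mul_pos ha ha]
  · refine Matrix.PosDef.of_dotProduct_mulVec_pos ?_ ?_
    · ext i j
      fin_cases i <;> fin_cases j <;> simp [A, B]
    · intro v hv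
      set σ := 2 * (2 * a₀ - a) * (3 * a₀ - 2 * a) / (a * a₀) with hσ
      have hsos : (12 * a₀ - 5 * a) * (2 * a * a₀) *
            (star v ⬝ᵥ (A + σ • B).mulVec v) =
          (12 * a₀ - 5 * a) * a *
              (a₀ * v 2 + (2 * a₀ - a) * v 0 + (2 * a - 3 * a₀) * v 1) ^ 2 +
            ((a₀ - a) * (12 * a₀ - 5 * a) * v 0 -
              (12 * a₀ ^ 2 - 13 * a * a₀ + 4 * a ^ 2) * v 1) ^ 2 +
            4 * a ^ 2 * (2 * a₀ - a) * (4 * a₀ - a) * v 1 ^ 2 := by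
        simp [A, B, δ, hσ, dotProduct, Matrix.mulVec, Fin.sum_univ_three]
        field_simp
        ring
      have h₁ : 0 < (12 * a₀ - 5 * a) * a := by positivity
      have h₂ : 0 < 4 * a ^ 2 * (2 * a₀ - a) * (4 * a₀ - a) :=
        mul_pos (mul_pos (by positivity) (by linarith)) (by linarith)
      refine pos_of_mul_pos_right (a := (12 * a₀ - 5 * a) * (2 * a * a₀)) ?_ (by positivity)
      rw [hsos]
      by_cases hy : v 1 = 0
      · by_cases hx : v 0 = 0
        · have hz : v 2 ≠ 0 := fun hz => hv (by ext i; fin_cases i <;> simp [hx, hy, hz])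
          simp only [hx, hy]
          ring_nf at h₁ ⊢
          have : 0 < (a₀ * v 2) ^ 2 := by positivity
          nlinarith [mul_pos h₁ this]
        · have : 0 < ((a₀ - a) * (12 * a₀ - 5 * a) * v 0 -
              (12 * a₀ ^ 2 - 13 * a * a₀ + 4 * a ^ 2) * v 1) ^ 2 := by
            rw [hy, mul_zero, sub_zero]
            positivity
          positivity
      · positivity
end

section
/- Let θ be a real number with θ > 1/2 and θ ≠ 1. Then there exists a real number σ > −1 satisfying simultaneously: σ(θ − 1) + θ > 0; −σ²/4 + (θ² + θ − 1)σ + θ² + 2θ − 1 > 0; and −θσ²/4 + (6θ² − 7θ + 2)σ − (4θ³ + 4θ² − 11θ + 4) > 0. -/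
/-- Core computational claim in the proof of Lemma 3.1: for every `θ > 1/2`,
`θ ≠ 1`, there exists `σ > -1` satisfying the three leading-minor inequalities. -/
theorem stmt_7 (θ : ℝ) (hθ : θ > 1 / 2) (hθ1 : θ ≠ 1) :
    ∃ σ : ℝ, σ > -1 ∧
      σ * (θ - 1) + θ > 0 ∧
      -σ ^ 2 / 4 + (θ ^ 2 + θ - 1) * σ + θ ^ 2 + 2 * θ - 1 > 0 ∧
      -θ * σ ^ 2 / 4 + (6 * θ ^ 2 - 7 * θ + 2) * σ
        - (4 * θ ^ 3 + 4 * θ ^ 2 - 11 * θ + 4) > 0 := by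
  have hpos : 0 < θ := by linarith
  obtain ⟨u, hu, rfl⟩ : ∃ u : ℝ, 0 < u ∧ θ = u + 1 / 2 := ⟨θ - 1 / 2, by linarith, by ring⟩
  generalize hx : u + 1 / 2 = x at *
  -- The vertex of the third quadratic, whose discriminant is `4 (x - 1)² (2x - 1) (4x - 1)`.
  refine ⟨2 * (6 * x ^ 2 - 7 * x + 2) / x, ?_, ?_, ?_, ?_⟩
  · rw [gt_iff_lt, lt_div_iff₀ hpos]
    nlinarith [sq_nonneg (24 * x - 13)]
  · have h : 2 * (6 * x ^ 2 - 7 * x + 2) / x * (x - 1) + x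
        = (u * (12 * u ^ 2 - 7 * u + 2) + 1 / 4) / x := by
      field_simp
      subst hx
      ring
    have hq : 0 < 12 * u ^ 2 - 7 * u + 2 := by nlinarith [sq_nonneg (24 * u - 7)]
    rw [h]
    positivity
  · have h : -(2 * (6 * x ^ 2 - 7 * x + 2) / x) ^ 2 / 4
          + (x ^ 2 + x - 1) * (2 * (6 * x ^ 2 - 7 * x + 2) / x) + x ^ 2 + 2 * x - 1
        = (u ^ 3 * (12 * u ^ 2 - 7 * u + 10) + u * (10 * u ^ 2 - u / 2 + 5 / 4) + 1 / 16)
          / x ^ 2 := by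
      field_simp
      subst hx
      ring
    have hq : 0 < 12 * u ^ 2 - 7 * u + 10 := by nlinarith [sq_nonneg (24 * u - 7)]
    have hr : 0 < 10 * u ^ 2 - u / 2 + 5 / 4 := by nlinarith [sq_nonneg (u - 1)]
    rw [h]
    positivity
  · have h : -x * (2 * (6 * x ^ 2 - 7 * x + 2) / x) ^ 2 / 4
          + (6 * x ^ 2 - 7 * x + 2) * (2 * (6 * x ^ 2 - 7 * x + 2) / x)
          - (4 * x ^ 3 + 4 * x ^ 2 - 11 * x + 4)
        = 4 * (x - 1) ^ 2 * ((2 * x - 1) * (4 * x - 1)) / x := by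
      field_simp
      ring
    have hsq : 0 < (x - 1) ^ 2 := sq_pos_of_ne_zero (sub_ne_zero.mpr hθ1)
    have hq : 0 < (2 * x - 1) * (4 * x - 1) := mul_pos (by linarith) (by linarith)
    rw [h]
    positivity
end

section
/- For a real number θ > 1/2 with θ ≠ 1, set Δ₁ = θ⁴ + 2θ³ and Δ₂ = 32θ⁴ − 88θ³ + 84θ² − 32θ + 4, and define A₁ = 2(θ² + θ − 1) − 2√Δ₁, A₂ = 2(θ² + θ − 1) + 2√Δ₁, B₁ = (2(6θ² − 7θ + 2) − 2√Δ₂)/θ, B₂ = (2(6θ² − 7θ + 2) + 2√Δ₂)/θ. Then (A₁ − B₂)(A₂ − B₁) < 0, and hence the open intervals (A₁, A₂) and (B₁, B₂) have nonempty intersection, i.e. max{A₁, B₁} < min{A₂, B₂}. -/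
/-- The two open σ-intervals in the proof of Lemma 3.1 intersect. -/
theorem stmt_9 (θ : ℝ) (hθ : θ > 1 / 2) (hθ1 : θ ≠ 1) :
    let Δ₁ : ℝ := θ ^ 4 + 2 * θ ^ 3
    let Δ₂ : ℝ := 32 * θ ^ 4 - 88 * θ ^ 3 + 84 * θ ^ 2 - 32 * θ + 4
    let A₁ : ℝ := 2 * (θ ^ 2 + θ - 1) - 2 * Real.sqrt Δ₁
    let A₂ : ℝ := 2 * (θ ^ 2 + θ - 1) + 2 * Real.sqrt Δ₁
    let B₁ : ℝ := (2 * (6 * θ ^ 2 - 7 * θ + 2) - 2 * Real.sqrt Δ₂) / θ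
    let B₂ : ℝ := (2 * (6 * θ ^ 2 - 7 * θ + 2) + 2 * Real.sqrt Δ₂) / θ
    (A₁ - B₂) * (A₂ - B₁) < 0 ∧ max A₁ B₁ < min A₂ B₂ := by
  intro Δ₁ Δ₂ A₁ A₂ B₁ B₂
  have hpos : 0 < θ := by linarith
  have hΔ₁ : 0 < Δ₁ := by positivity
  have hΔ₂ : 0 < Δ₂ := by
    have hfactor : Δ₂ = 4 * (θ - 1) ^ 2 * ((2 * θ - 1) * (4 * θ - 1)) := by
      simp only [Δ₂]; ring
    have hsq : 0 < (θ - 1) ^ 2 := by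
      have := sub_ne_zero.mpr hθ1
      positivity
    rw [hfactor]
    exact mul_pos (by linarith) (mul_pos (by linarith) (by linarith))
  have hr : 0 < √Δ₁ := Real.sqrt_pos.mpr hΔ₁
  have hs : 0 < √Δ₂ := Real.sqrt_pos.mpr hΔ₂
  have hP : 0 < 12 * θ ^ 4 - 5 * θ ^ 3 - 24 * θ ^ 2 + 28 * θ - 8 := by
    obtain ⟨t, rfl⟩ : ∃ t, θ = t + 1 / 2 := ⟨θ - 1 / 2, by ring⟩
    have ht : 0 < t := by linarith
    have hq : 0 < 19 * t ^ 2 - 27 / 2 * t + 25 / 4 := by nlinarith [sq_nonneg (t - 27 / 76)]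
    have : 0 < 12 * t ^ 4 + t * (19 * t ^ 2 - 27 / 2 * t + 25 / 4) + 1 / 8 := by positivity
    linarith
  have hkey : (A₁ - B₂) * (A₂ - B₁) =
      -(4 / θ * (2 * (√Δ₁ * √Δ₂) +
        (12 * θ ^ 4 - 5 * θ ^ 3 - 24 * θ ^ 2 + 28 * θ - 8))) := by
    have hr2 : √Δ₁ ^ 2 = θ ^ 4 + 2 * θ ^ 3 := Real.sq_sqrt hΔ₁.le
    have hs2 : √Δ₂ ^ 2 = 32 * θ ^ 4 - 88 * θ ^ 3 + 84 * θ ^ 2 - 32 * θ + 4 :=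
      Real.sq_sqrt hΔ₂.le
    simp only [A₁, A₂, B₁, B₂]
    generalize √Δ₁ = r at *
    generalize √Δ₂ = s at *
    field_simp
    linear_combination (-4 * θ ^ 2) * hr2 - 4 * hs2
  have hneg : (A₁ - B₂) * (A₂ - B₁) < 0 := by
    rw [hkey, neg_lt_zero]
    positivity
  have hA : A₁ < A₂ := by simp only [A₁, A₂]; linarith
  have hB : B₁ < B₂ := by
    simp only [B₁, B₂]
    gcongr
    linarith
  refine ⟨hneg, ?_⟩
  obtain ⟨h₁, h₂⟩ | ⟨h₁, h₂⟩ := mul_neg_iff.mp hneg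
  · linarith
  · exact max_lt (lt_min hA (by linarith)) (lt_min (by linarith) hB)
end

section
/- Let a > 0 and a_0 be real numbers with a_0 > a/2 and a_0 ≠ a, and set δ = a_0/2. Define the symmetric 3×3 real matrices A = [[δ, (a − a_0)/2, a_0 − a/2], [(a − a_0)/2, a_0, a − 3a_0/2], [a_0 − a/2, a − 3a_0/2, a_0 − δ]] and B = [[(a_0 − a)/2, a/4 − a_0/2, 0], [a/4 − a_0/2, a_0/2, 0], [0, 0, 0]]. Then there exist a real number σ > −1 and a real number ε > 0 such that the matrix A + σB − εI₃ is positive definite, where I₃ is the 3×3 identity matrix. -/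
/-- Positive definiteness of a real matrix survives subtraction of a small multiple of `1`. -/
theorem Matrix.PosDef.exists_pos_sub_smul_one {n : Type*} [Fintype n] [DecidableEq n]
    {M : Matrix n n ℝ} (hM : M.PosDef) :
    ∃ ε : ℝ, ε > 0 ∧ (M - ε • (1 : Matrix n n ℝ)).PosDef := by
  obtain ⟨ε, hε, hlt⟩ :=
    Pi.exists_forall_pos_add_lt (x := fun _ : n => (0 : ℝ)) hM.eigenvalues_pos
  refine ⟨ε, hε, ?_⟩
  have hdiag : (Matrix.diagonal (hM.1.eigenvalues) - ε • (1 : Matrix n n ℝ)).PosDef := by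
    rw [Matrix.smul_one_eq_diagonal, Matrix.diagonal_sub, Matrix.posDef_diagonal_iff]
    intro i
    have := hlt i
    linarith
  have hconj : M - ε • (1 : Matrix n n ℝ) =
      Unitary.conjStarAlgAut ℝ _ hM.1.eigenvectorUnitary
        (Matrix.diagonal (hM.1.eigenvalues) - ε • (1 : Matrix n n ℝ)) := by
    rw [map_sub, map_smul, map_one]
    congr 1
    exact hM.1.spectral_theorem
  rw [hconj, Unitary.conjStarAlgAut_apply]
  exact (Matrix.IsUnit.posDef_star_right_conjugate_iff Unitary.isUnit_coe).2 hdiag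

open scoped Matrix in
/-- A symmetric `3 × 3` real matrix is positive definite when its pivots, taken in the order
third, first, second coordinate, are positive. -/
theorem Matrix.posDef_fin_three_of_pivots_pos {p q r u v w : ℝ} (hw : 0 < w)
    (hp : 0 < p * w - r ^ 2)
    (hd : 0 < (p * w - r ^ 2) * (u * w - v ^ 2) - (q * w - r * v) ^ 2) :
    (!![p, q, r; q, u, v; r, v, w] : Matrix (Fin 3) (Fin 3) ℝ).PosDef := by
  refine .of_dotProduct_mulVec_pos ?_ fun x hx => ?_
  · ext i j
    fin_cases i <;> fin_cases j <;> simp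
  · have hsum : star x ⬝ᵥ (!![p, q, r; q, u, v; r, v, w] *ᵥ x) =
        p * x 0 ^ 2 + u * x 1 ^ 2 + w * x 2 ^ 2
          + 2 * (q * x 0 * x 1 + r * x 0 * x 2 + v * x 1 * x 2) := by
      simp [Matrix.mulVec, dotProduct, Fin.sum_univ_three]
      ring
    rw [hsum]
    refine pos_of_mul_pos_right (a := w * (p * w - r ^ 2)) ?_ (by positivity)
    have hsq : w * (p * w - r ^ 2) * (p * x 0 ^ 2 + u * x 1 ^ 2 + w * x 2 ^ 2
          + 2 * (q * x 0 * x 1 + r * x 0 * x 2 + v * x 1 * x 2)) =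
        (p * w - r ^ 2) * (r * x 0 + v * x 1 + w * x 2) ^ 2
          + ((p * w - r ^ 2) * x 0 + (q * w - r * v) * x 1) ^ 2
          + ((p * w - r ^ 2) * (u * w - v ^ 2) - (q * w - r * v) ^ 2) * x 1 ^ 2 := by
      ring
    rw [hsq]
    by_cases h1 : x 1 = 0
    · by_cases h0 : x 0 = 0
      · have h2 : x 2 ≠ 0 := fun h2 => hx (by ext i; fin_cases i <;> assumption)
        simp only [h0, h1, mul_zero, zero_add, add_zero]
        positivity
      · simp only [h1, mul_zero, add_zero]
        have : (p * w - r ^ 2) * x 0 ≠ 0 := mul_ne_zero hp.ne' h0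
        positivity
    · positivity

/-- Perturbed version of Lemma 3.1 used in the error estimates of Section 4:
`A + σB - εI₃` is positive definite for some `σ > -1` and some `ε > 0`. -/
theorem stmt_14 (a a₀ : ℝ) (ha : 0 < a) (ha₀ : a₀ > a / 2) (hne : a₀ ≠ a) :
    let δ : ℝ := a₀ / 2
    let A : Matrix (Fin 3) (Fin 3) ℝ :=
      !![δ, (a - a₀) / 2, a₀ - a / 2;
         (a - a₀) / 2, a₀, a - 3 * a₀ / 2;
         a₀ - a / 2, a - 3 * a₀ / 2, a₀ - δ]
    let B : Matrix (Fin 3) (Fin 3) ℝ :=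
      !![(a₀ - a) / 2, a / 4 - a₀ / 2, 0;
         a / 4 - a₀ / 2, a₀ / 2, 0;
         0, 0, 0]
    ∃ σ : ℝ, σ > -1 ∧ ∃ ε : ℝ, ε > 0 ∧
      (A + σ • B - ε • (1 : Matrix (Fin 3) (Fin 3) ℝ)).PosDef := by
  intro δ A B
  have ha₀_pos : 0 < a₀ := by linarith
  have hsq : 0 < (a₀ - a) ^ 2 := sq_pos_of_ne_zero (sub_ne_zero.2 hne)
  refine ⟨2 * (2 * a₀ - a) * (3 * a₀ - 2 * a) / (a * a₀), ?_,
    Matrix.PosDef.exists_pos_sub_smul_one ?_⟩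
  · rw [gt_iff_lt, lt_div_iff₀ (by positivity)]
    nlinarith [sq_nonneg (24 * a₀ - 13 * a), sq_pos_of_pos ha]
  · generalize hσ : 2 * (2 * a₀ - a) * (3 * a₀ - 2 * a) / (a * a₀) = σ
    have hAB : A + σ • B =
        !![a₀ / 2 + σ * ((a₀ - a) / 2), (a - a₀) / 2 + σ * (a / 4 - a₀ / 2), a₀ - a / 2;
           (a - a₀) / 2 + σ * (a / 4 - a₀ / 2), a₀ + σ * (a₀ / 2), a - 3 * a₀ / 2;
           a₀ - a / 2, a - 3 * a₀ / 2, a₀ / 2] := by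
      ext i j
      fin_cases i <;> fin_cases j <;> simp [A, B, δ, sub_half]
    rw [hAB]
    refine Matrix.posDef_fin_three_of_pivots_pos (by positivity) ?_ ?_
    · have hpivot : (a₀ / 2 + σ * ((a₀ - a) / 2)) * (a₀ / 2) - (a₀ - a / 2) ^ 2 =
          (a₀ - a) ^ 2 * (12 * a₀ - 5 * a) / (4 * a) := by
        rw [← hσ]
        field_simp
        ring
      rw [hpivot]
      have : 0 < 12 * a₀ - 5 * a := by linarith
      positivity
    · have hdisc : ((a₀ / 2 + σ * ((a₀ - a) / 2)) * (a₀ / 2) - (a₀ - a / 2) ^ 2)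
            * ((a₀ + σ * (a₀ / 2)) * (a₀ / 2) - (a - 3 * a₀ / 2) ^ 2)
            - (((a - a₀) / 2 + σ * (a / 4 - a₀ / 2)) * (a₀ / 2)
              - (a₀ - a / 2) * (a - 3 * a₀ / 2)) ^ 2 =
          (2 * a₀ - a) * (a₀ - a) ^ 2 * (4 * a₀ - a) / 4 := by
        rw [← hσ]
        field_simp
        ring
      rw [hdisc]
      have h2 : 0 < 2 * a₀ - a := by linarith
      have h4 : 0 < 4 * a₀ - a := by linarith
      positivity
end
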